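/- In the sum-variant with k = 2 facilities, there exists a strategyproof two-phase mechanism whose approximation ratio is at most 1 + √2; that is, on every instance its output has social cost at most (1+√2) times the minimum social cost over all feasible solutions. -/

import Mathlib

open Finset

noncomputable section

/-- A distributed facility location setting for `k` facilities and `m` groups:
`n ≥ 2` agents on the real line, partitioned into `m ≥ k` disjoint nonempty groups. -/
structure FLSetting (k m : ℕ) where
  n : ℕ
  hn : 2 ≤ n
  hmk : k ≤ m
  grp : Fin n → Fin m
  surj : Function.Surjective grp

/-- A two-phase mechanism for `k` facilities: for each number `m` of groups, a
representative function on finite multisets of reals, and a selection function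
producing the `k` facility locations from the multiset of representatives. -/
structure TwoPhase (k : ℕ) where
  rep : ℕ → Multiset ℝ → ℝ
  sel : ℕ → Multiset ℝ → Fin k → ℝ

/-- Validity of a two-phase mechanism: the representative of a nonempty multiset
is one of its elements, and the selected facility locations form a sub-multiset
of the representatives. -/
def TwoPhase.Valid {k : ℕ} (M : TwoPhase k) : Prop :=
  (∀ (m : ℕ) (S : Multiset ℝ), S ≠ 0 → M.rep m S ∈ S) ∧
  (∀ (m : ℕ) (R : Multiset ℝ), Multiset.card R = m → k ≤ m →
    (↑(List.ofFn (M.sel m R)) : Multiset ℝ) ≤ R)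

/-- The multiset of (reported) positions of the agents in group `j`. -/
def groupMS {k m : ℕ} (S : FLSetting k m) (x : Fin S.n → ℝ) (j : Fin m) : Multiset ℝ :=
  (Finset.univ.filter (fun i => S.grp i = j)).val.map x

/-- The number of agents in group `j`. -/
def groupSize {k m : ℕ} (S : FLSetting k m) (j : Fin m) : ℕ :=
  (Finset.univ.filter (fun i => S.grp i = j)).card

/-- The multiset of the `m` group representatives. -/
def repsMS {k m : ℕ} (M : TwoPhase k) (S : FLSetting k m) (x : Fin S.n → ℝ) : Multiset ℝ :=
  (Finset.univ.val.map fun j : Fin m => M.rep m (groupMS S x j))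

/-- The facility locations output by mechanism `M` on reported positions `x`. -/
def outcome {k m : ℕ} (M : TwoPhase k) (S : FLSetting k m) (x : Fin S.n → ℝ) : Fin k → ℝ :=
  M.sel m (repsMS M S x)

/-- Sum-variant individual cost: total distance to all facilities. -/
def sumCost (k : ℕ) (xi : ℝ) (y : Fin k → ℝ) : ℝ := ∑ ℓ, |xi - y ℓ|

/-- Max-variant individual cost: distance to the farthest facility. -/
def maxCost (k : ℕ) (xi : ℝ) (y : Fin k → ℝ) : ℝ := ⨆ ℓ, |xi - y ℓ|

/-- Social cost: average over groups of the average individual cost within the group. -/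
def SC {k m : ℕ} (cost : ℝ → (Fin k → ℝ) → ℝ) (S : FLSetting k m) (x : Fin S.n → ℝ)
    (y : Fin k → ℝ) : ℝ :=
  (1 / (m : ℝ)) * ∑ j : Fin m,
    (1 / (groupSize S j : ℝ)) *
      ∑ i ∈ Finset.univ.filter (fun i => S.grp i = j), cost (x i) y

/-- A feasible solution opens the `k` facilities at the positions of `k` distinct agents. -/
def Feasible {k m : ℕ} (S : FLSetting k m) (x : Fin S.n → ℝ) (y : Fin k → ℝ) : Prop :=
  ∃ f : Fin k → Fin S.n, Function.Injective f ∧ ∀ ℓ, y ℓ = x (f ℓ)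

/-- Strategyproofness with respect to an individual cost function. -/
def Strategyproof {k : ℕ} (cost : ℝ → (Fin k → ℝ) → ℝ) (M : TwoPhase k) : Prop :=
  ∀ (m : ℕ) (S : FLSetting k m) (x : Fin S.n → ℝ) (i : Fin S.n) (x' : ℝ),
    cost (x i) (outcome M S x) ≤ cost (x i) (outcome M S (Function.update x i x'))

/-- Strategyproofness restricted to instances with exactly `m` groups. -/
def StrategyproofOn {k : ℕ} (cost : ℝ → (Fin k → ℝ) → ℝ) (M : TwoPhase k) (m : ℕ) : Prop :=
  ∀ (S : FLSetting k m) (x : Fin S.n → ℝ) (i : Fin S.n) (x' : ℝ),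
    cost (x i) (outcome M S x) ≤ cost (x i) (outcome M S (Function.update x i x'))

/-- The `t`-th leftmost element of a multiset of reals (1-indexed). -/
def kthLeftmost (S : Multiset ℝ) (t : ℕ) : ℝ := (S.sort (· ≤ ·)).getD (t - 1) 0

/-- The mechanism `M_m(θ, ℓ, r)` for two facilities: each group's representative is the
position of its `⌈θ·n_g⌉`-th leftmost agent, and the facilities are opened at the
`⌈ℓm⌉`-th and `⌈rm⌉`-th leftmost representative locations. -/
def Mmech (θ l r : ℝ) : TwoPhase 2 where
  rep := fun _ S => kthLeftmost S ⌈θ * (Multiset.card S : ℝ)⌉₊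
  sel := fun m R => ![kthLeftmost R ⌈l * (m : ℝ)⌉₊, kthLeftmost R ⌈r * (m : ℝ)⌉₊]


/-! ### Order statistics -/

theorem List.getElem_iff_lt_countP_of_antitone {l : List ℝ} (hl : l.Pairwise (· ≤ ·))
    (p : ℝ → Prop) [DecidablePred p] (hp : ∀ a b, a ≤ b → p b → p a) (i : ℕ)
    (hi : i < l.length) : p l[i] ↔ i < l.countP (fun a => decide (p a)) := by
  induction l generalizing i with
  | nil => simp at hi
  | cons a l ih =>
    rw [List.pairwise_cons] at hl
    by_cases ha : p a
    · rw [List.countP_cons_of_pos (by simpa using ha)]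
      cases i with
      | zero => simpa using ha
      | succ i =>
        rw [List.getElem_cons_succ, ih hl.2 i (by simpa using hi)]
        omega
    · have hz : (a :: l).countP (fun a => decide (p a)) = 0 := by
        rw [List.countP_eq_zero]
        intro b hb
        rcases List.mem_cons.1 hb with rfl | hb
        · simpa using ha
        · simpa using fun h => ha (hp _ _ (hl.1 b hb) h)
      rw [hz]
      simp only [not_lt_zero, iff_false]
      intro h
      rcases List.mem_cons.1 (List.getElem_mem hi) with hb | hb
      · exact ha (hb ▸ h)
      · exact ha (hp _ _ (hl.1 _ hb) h)

theorem kthLeftmost_eq_getElem {S : Multiset ℝ} {t : ℕ} (h1 : 1 ≤ t)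
    (h2 : t ≤ Multiset.card S) :
    kthLeftmost S t =
      (S.sort (· ≤ ·))[t - 1]'(by rw [Multiset.length_sort]; omega) := by
  unfold kthLeftmost
  rw [List.getD_eq_getElem]

theorem kthLeftmost_mem {S : Multiset ℝ} {t : ℕ} (h1 : 1 ≤ t) (h2 : t ≤ Multiset.card S) :
    kthLeftmost S t ∈ S := by
  rw [kthLeftmost_eq_getElem h1 h2, ← Multiset.mem_sort (r := (· ≤ ·))]
  exact List.getElem_mem _

/-- An initial segment contains the `t`-th leftmost element iff it contains `t` elements. -/
theorem kthLeftmost_iff_le_countP {S : Multiset ℝ} {t : ℕ} (h1 : 1 ≤ t)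
    (h2 : t ≤ Multiset.card S) (p : ℝ → Prop) [DecidablePred p]
    (hp : ∀ a b, a ≤ b → p b → p a) : p (kthLeftmost S t) ↔ t ≤ S.countP p := by
  have hS : S.countP p = (S.sort (· ≤ ·)).countP (fun a => decide (p a)) := by
    conv_lhs => rw [← Multiset.sort_eq S (· ≤ ·)]
    exact Multiset.coe_countP p _
  rw [kthLeftmost_eq_getElem h1 h2,
    List.getElem_iff_lt_countP_of_antitone (Multiset.pairwise_sort S _) p hp, hS]
  omega

theorem kthLeftmost_le_iff {S : Multiset ℝ} {t : ℕ} (h1 : 1 ≤ t)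
    (h2 : t ≤ Multiset.card S) (z : ℝ) :
    kthLeftmost S t ≤ z ↔ t ≤ S.countP (· ≤ z) :=
  kthLeftmost_iff_le_countP h1 h2 (· ≤ z) fun _ _ hab hb => hab.trans hb

theorem le_countP_le_kthLeftmost {S : Multiset ℝ} {t : ℕ} (h1 : 1 ≤ t)
    (h2 : t ≤ Multiset.card S) : t ≤ S.countP (· ≤ kthLeftmost S t) :=
  (kthLeftmost_le_iff h1 h2 _).1 le_rfl

theorem card_lt_countP_kthLeftmost_le_add {S : Multiset ℝ} {t : ℕ} (h1 : 1 ≤ t)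
    (h2 : t ≤ Multiset.card S) :
    Multiset.card S < S.countP (kthLeftmost S t ≤ ·) + t := by
  have h := (kthLeftmost_iff_le_countP h1 h2 (· < kthLeftmost S t)
    fun _ _ hab hb => hab.trans_lt hb).not.1 (lt_irrefl _)
  have hc := Multiset.card_eq_countP_add_countP (kthLeftmost S t ≤ ·) S
  simp only [not_le] at hc
  omega

theorem kthLeftmost_mono {S : Multiset ℝ} {s t : ℕ} (h1 : 1 ≤ s) (hst : s ≤ t)
    (h2 : t ≤ Multiset.card S) : kthLeftmost S s ≤ kthLeftmost S t := by
  rw [kthLeftmost_le_iff h1 (hst.trans h2)]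
  exact hst.trans (le_countP_le_kthLeftmost (h1.trans hst) h2)

theorem pair_kthLeftmost_le {S : Multiset ℝ} {s t : ℕ} (h1 : 1 ≤ s) (hst : s < t)
    (h2 : t ≤ Multiset.card S) :
    (↑[kthLeftmost S s, kthLeftmost S t] : Multiset ℝ) ≤ S := by
  have hlen : (S.sort (· ≤ ·)).length = Multiset.card S := Multiset.length_sort ..
  conv_rhs => rw [← Multiset.sort_eq S (· ≤ ·)]
  rw [kthLeftmost_eq_getElem h1 (hst.le.trans h2),
    kthLeftmost_eq_getElem (h1.trans hst.le) h2, Multiset.coe_le]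
  refine List.Sublist.subperm ?_
  exact List.map_getElem_sublist (l := S.sort (· ≤ ·))
    (is := [⟨s - 1, by omega⟩, ⟨t - 1, by omega⟩])
    (by simp only [List.pairwise_cons, List.mem_singleton, forall_eq, Fin.mk_lt_mk]
        simp; omega)

/-- Replacing an entry by one lying farther from `x` on the same side can only move an order
statistic away from `x`. -/
theorem kthLeftmost_cons_mem_uIcc {T : Multiset ℝ} {t : ℕ} (h1 : 1 ≤ t)
    (h2 : t ≤ Multiset.card T + 1) {x r r' : ℝ} (hr : r ∈ Set.uIcc x r') :
    kthLeftmost (r ::ₘ T) t ∈ Set.uIcc x (kthLeftmost (r' ::ₘ T) t) := by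
  have hc : t ≤ Multiset.card (r ::ₘ T) := by simpa using h2
  have hc' : t ≤ Multiset.card (r' ::ₘ T) := by simpa using h2
  have h := kthLeftmost_le_iff h1 hc
  have h' := kthLeftmost_le_iff h1 hc'
  simp only [Multiset.countP_cons] at h h'
  generalize kthLeftmost (r ::ₘ T) t = a at *
  generalize kthLeftmost (r' ::ₘ T) t = b at *
  rw [Set.mem_uIcc] at hr ⊢
  rcases hr with ⟨hx, hr⟩ | ⟨hr, hx⟩
  · have hab : a ≤ b := by
      rw [h]
      refine ((h' b).1 le_rfl).trans ?_
      split_ifs <;> first | omega | (exfalso; linarith)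
    rcases le_or_gt x a with hxa | hxa
    · exact Or.inl ⟨hxa, hab⟩
    · refine Or.inr ⟨?_, hxa.le⟩
      rw [h']
      have := (h a).1 le_rfl
      rw [if_neg (by linarith)] at this
      omega
  · have hba : b ≤ a := by
      rw [h']
      refine ((h a).1 le_rfl).trans ?_
      split_ifs <;> first | omega | (exfalso; linarith)
    rcases le_or_gt a x with hxa | hxa
    · exact Or.inr ⟨hba, hxa⟩
    · refine Or.inl ⟨hxa.le, ?_⟩
      by_contra! hlt
      have hz := (h' (max b x)).1 (le_max_left _ _)
      rw [if_pos (hr.trans (hx.trans (le_max_right _ _))),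
        ← if_pos (c := r ≤ max b x) (t := 1) (e := 0) (hx.trans (le_max_right _ _)), ← h] at hz
      exact absurd hz (not_le.2 (max_lt hlt hxa))

theorem kthLeftmost_map_mem_uIcc {ι : Type*} [DecidableEq ι] {s : Finset ι} {i : ι}
    (hi : i ∈ s) {f g : ι → ℝ} (hfg : ∀ j, j ≠ i → f j = g j) {t : ℕ} (h1 : 1 ≤ t)
    (h2 : t ≤ s.card) {x : ℝ} (hx : f i ∈ Set.uIcc x (g i)) :
    kthLeftmost (s.val.map f) t ∈ Set.uIcc x (kthLeftmost (s.val.map g) t) := by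
  have hcons : ∀ h : ι → ℝ, s.val.map h = h i ::ₘ (s.erase i).val.map h := by
    intro h
    conv_lhs => rw [← Finset.insert_erase hi, Finset.insert_val_of_notMem (by simp)]
    rw [Multiset.map_cons]
  have heq : (s.erase i).val.map f = (s.erase i).val.map g :=
    Multiset.map_congr rfl fun j hj => hfg j (Finset.ne_of_mem_erase hj)
  rw [hcons f, hcons g, heq]
  refine kthLeftmost_cons_mem_uIcc h1 ?_ hx
  rw [Multiset.card_map, Finset.card_val, Finset.card_erase_of_mem hi]
  omega

theorem abs_sub_le_abs_sub_of_mem_uIcc {x a b : ℝ} (h : a ∈ Set.uIcc x b) :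
    |x - a| ≤ |x - b| := by
  rw [abs_sub_comm x a, abs_sub_comm x b]
  exact Set.abs_sub_left_of_mem_uIcc h

/-! ### Mechanisms that open the `s m`-th and `t m`-th leftmost of the `θ m`-quantiles -/

/-- The mechanism whose group representatives are the `⌈θ m · n_g⌉`-th leftmost agents and which
opens the `s m`-th and `t m`-th leftmost representatives. -/
def quantileMech (θ : ℕ → ℝ) (s t : ℕ → ℕ) : TwoPhase 2 where
  rep := fun m S => kthLeftmost S ⌈θ m * (Multiset.card S : ℝ)⌉₊
  sel := fun m R => ![kthLeftmost R (s m), kthLeftmost R (t m)]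

theorem one_le_ceil_mul {θ : ℝ} (h0 : 0 < θ) {n : ℕ} (hn : 0 < n) : 1 ≤ ⌈θ * (n : ℝ)⌉₊ :=
  Nat.one_le_ceil_iff.2 (by positivity)

theorem ceil_mul_le {θ : ℝ} (h1 : θ ≤ 1) (n : ℕ) : ⌈θ * (n : ℝ)⌉₊ ≤ n :=
  Nat.ceil_le.2 (mul_le_of_le_one_left n.cast_nonneg h1)

theorem quantileMech_valid {θ : ℕ → ℝ} {s t : ℕ → ℕ} (hθ0 : ∀ m, 0 < θ m)
    (hθ1 : ∀ m, θ m ≤ 1) (hst : ∀ m, 2 ≤ m → 1 ≤ s m ∧ s m < t m ∧ t m ≤ m) :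
    (quantileMech θ s t).Valid := by
  refine ⟨fun m S hS => kthLeftmost_mem (one_le_ceil_mul (hθ0 m) (Multiset.card_pos.2 hS))
    (ceil_mul_le (hθ1 m) _), fun m R hR hm => ?_⟩
  obtain ⟨h1, h2, h3⟩ := hst m hm
  simpa [quantileMech, List.ofFn_succ] using pair_kthLeftmost_le h1 h2 (h3.trans hR.ge)

theorem card_groupMS {m : ℕ} (S : FLSetting 2 m) (x : Fin S.n → ℝ) (j : Fin m) :
    Multiset.card (groupMS S x j) = groupSize S j := by
  rw [groupMS, Multiset.card_map]
  rfl

theorem groupSize_pos {m : ℕ} (S : FLSetting 2 m) (j : Fin m) : 0 < groupSize S j := by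
  obtain ⟨i, hi⟩ := S.surj j
  exact Finset.card_pos.2 ⟨i, by simpa using hi⟩

theorem quantileMech_strategyproof {θ : ℕ → ℝ} {s t : ℕ → ℕ} (hθ0 : ∀ m, 0 < θ m)
    (hθ1 : ∀ m, θ m ≤ 1) (hst : ∀ m, 2 ≤ m → 1 ≤ s m ∧ s m < t m ∧ t m ≤ m) :
    Strategyproof (sumCost 2) (quantileMech θ s t) := by
  intro m S x i x'
  obtain ⟨h1, h2, h3⟩ := hst m S.hmk
  have hrep : (quantileMech θ s t).rep m (groupMS S x (S.grp i)) ∈ Set.uIcc (x i)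
      ((quantileMech θ s t).rep m (groupMS S (Function.update x i x') (S.grp i))) := by
    simp only [quantileMech, card_groupMS]
    exact kthLeftmost_map_mem_uIcc (i := i) (by simp)
      (fun j hj => (Function.update_of_ne hj _ _).symm)
      (one_le_ceil_mul (hθ0 m) (groupSize_pos S _)) (ceil_mul_le (hθ1 m) _) Set.left_mem_uIcc
  have hother : ∀ j, j ≠ S.grp i → (quantileMech θ s t).rep m (groupMS S x j) =
      (quantileMech θ s t).rep m (groupMS S (Function.update x i x') j) := by
    intro j hj
    congr 1
    refine Multiset.map_congr rfl fun a ha => (Function.update_of_ne ?_ _ _).symm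
    rintro rfl
    exact hj (Finset.mem_filter.1 (Finset.mem_val ▸ ha)).2.symm
  have hsel : ∀ q, 1 ≤ q → q ≤ m →
      |x i - kthLeftmost (repsMS (quantileMech θ s t) S x) q| ≤
        |x i - kthLeftmost (repsMS (quantileMech θ s t) S (Function.update x i x')) q| :=
    fun q hq hqm => abs_sub_le_abs_sub_of_mem_uIcc
      (kthLeftmost_map_mem_uIcc (Finset.mem_univ _) hother hq (by simpa using hqm) hrep)
  simpa [sumCost, outcome, quantileMech] using
    add_le_add (hsel _ h1 (h2.le.trans h3)) (hsel _ (h1.trans h2.le) h3)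

/-! ### Weighted masses -/

/-- The weight of an agent in the social cost. -/
def agentWeight {m : ℕ} (S : FLSetting 2 m) (i : Fin S.n) : ℝ :=
  1 / (m : ℝ) * (1 / (groupSize S (S.grp i) : ℝ))

theorem agentWeight_nonneg {m : ℕ} (S : FLSetting 2 m) (i : Fin S.n) : 0 ≤ agentWeight S i := by
  unfold agentWeight
  positivity

theorem sum_agentWeight_mul {m : ℕ} (S : FLSetting 2 m) (h : Fin S.n → ℝ) :
    ∑ i, agentWeight S i * h i = (1 / (m : ℝ)) * ∑ j : Fin m,
      (1 / (groupSize S j : ℝ)) * ∑ i ∈ Finset.univ.filter (fun i => S.grp i = j), h i := by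
  rw [← Finset.sum_fiberwise Finset.univ S.grp, Finset.mul_sum]
  refine Finset.sum_congr rfl fun j _ => ?_
  rw [Finset.mul_sum, Finset.mul_sum]
  refine Finset.sum_congr rfl fun i hi => ?_
  rw [agentWeight, (Finset.mem_filter.1 hi).2, mul_assoc]

theorem sum_agentWeight {m : ℕ} (S : FLSetting 2 m) : ∑ i, agentWeight S i = 1 := by
  have hm : (m : ℝ) ≠ 0 := by have := S.hmk; positivity
  have h := sum_agentWeight_mul S fun _ => 1
  simp only [mul_one] at h
  rw [h, Finset.sum_congr rfl (g := fun _ => (1 : ℝ))]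
  · simp [hm]
  · intro j _
    have := groupSize_pos S j
    rw [Finset.sum_const, nsmul_one]
    exact one_div_mul_cancel (by positivity)

theorem SC_sumCost_two {m : ℕ} (S : FLSetting 2 m) (x : Fin S.n → ℝ) (y : Fin 2 → ℝ) :
    SC (sumCost 2) S x y = ∑ i, agentWeight S i * (|x i - y 0| + |x i - y 1|) := by
  rw [sum_agentWeight_mul]
  simp [SC, sumCost]

/-- If a fraction `u` of every group whose representative satisfies `p` satisfies `p`, and `q`
representatives satisfy `p`, then the agents satisfying `p` have total weight at least
`u * q / m`. -/
theorem le_sum_agentWeight_indicator {m : ℕ} (S : FLSetting 2 m) (x : Fin S.n → ℝ)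
    (r : Fin m → ℝ) (p : ℝ → Prop) [DecidablePred p] {u : ℝ} {q : ℕ} (hu : 0 ≤ u)
    (hgrp : ∀ j, p (r j) → u * groupSize S j ≤ (groupMS S x j).countP p)
    (hq : q ≤ ((Finset.univ : Finset (Fin m)).val.map r).countP p) :
    u * q / m ≤ ∑ i, agentWeight S i * (if p (x i) then 1 else 0) := by
  have hm : (0 : ℝ) < m := by have := S.hmk; positivity
  rw [sum_agentWeight_mul, div_eq_inv_mul, one_div]
  refine mul_le_mul_of_nonneg_left ?_ (by positivity)
  have hq' : (q : ℝ) ≤ ∑ j : Fin m, if p (r j) then (1 : ℝ) else 0 := by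
    rw [Multiset.countP_map] at hq
    rw [Finset.sum_boole]
    exact_mod_cast hq
  calc u * q ≤ u * ∑ j : Fin m, (if p (r j) then (1 : ℝ) else 0) := by gcongr
    _ = ∑ j : Fin m, u * (if p (r j) then (1 : ℝ) else 0) := Finset.mul_sum ..
    _ ≤ _ := Finset.sum_le_sum fun j _ => ?_
  have hn : (0 : ℝ) < groupSize S j := by exact_mod_cast groupSize_pos S j
  have hcount : ∑ i ∈ Finset.univ.filter (fun i => S.grp i = j),
      (if p (x i) then (1 : ℝ) else 0) = (groupMS S x j).countP p := by
    rw [groupMS, Multiset.countP_map, Finset.sum_boole]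
    rfl
  rw [hcount]
  split_ifs with hp
  · rw [mul_one, one_div, ← div_eq_inv_mul, le_div_iff₀ hn]
    exact hgrp j hp
  · rw [mul_zero]
    positivity

/-- If enough weight lies on either side of each of `a ≤ b`, then the pair `(a, b)` is a
`(1 + √2)`-approximation of opening both facilities at `o`. -/
theorem sum_mul_abs_sub_pair_le {ι : Type*} [Fintype ι] {w x : ι → ℝ} (hw : ∀ i, 0 ≤ w i)
    (hw1 : ∑ i, w i = 1) {a b : ℝ} (hab : a ≤ b)
    (hal : (√2 - 1) / 2 ≤ ∑ i, w i * (if x i ≤ a then 1 else 0))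
    (har : (2 - √2) / 2 ≤ ∑ i, w i * (if a ≤ x i then 1 else 0))
    (hbl : (2 - √2) / 2 ≤ ∑ i, w i * (if x i ≤ b then 1 else 0))
    (hbr : (√2 - 1) / 2 ≤ ∑ i, w i * (if b ≤ x i then 1 else 0)) (o : ℝ) :
    ∑ i, w i * (|x i - a| + |x i - b|) ≤ 2 * (1 + √2) * ∑ i, w i * |x i - o| := by
  have hsq : √2 * √2 = 2 := Real.mul_self_sqrt (by norm_num)
  have hs0 : 0 ≤ √2 := Real.sqrt_nonneg 2
  generalize √2 = σ at *
  have key (A B C : ℝ) (f g : ι → ℝ)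
      (hpt : ∀ i, |x i - a| + |x i - b| ≤ 2 * (1 + σ) * |x i - o| + A - B * f i - C * g i)
      (hA : A ≤ B * (∑ i, w i * f i) + C * (∑ i, w i * g i)) :
      ∑ i, w i * (|x i - a| + |x i - b|) ≤ 2 * (1 + σ) * ∑ i, w i * |x i - o| := by
    calc ∑ i, w i * (|x i - a| + |x i - b|)
        ≤ ∑ i, w i * (2 * (1 + σ) * |x i - o| + A - B * f i - C * g i) :=
          Finset.sum_le_sum fun i _ => mul_le_mul_of_nonneg_left (hpt i) (hw i)
      _ = 2 * (1 + σ) * (∑ i, w i * |x i - o|) + A * (∑ i, w i) - B * (∑ i, w i * f i)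
            - C * (∑ i, w i * g i) := by
          simp only [Finset.mul_sum, ← Finset.sum_add_distrib, ← Finset.sum_sub_distrib]
          exact Finset.sum_congr rfl fun i _ => by ring
      _ ≤ _ := by rw [hw1]; linarith
  have hmul : ∀ z : ℝ, 0 ≤ z → 0 ≤ σ * z := fun z hz => mul_nonneg hs0 hz
  rcases le_total o a with hoa | hoa
  · refine key (a - o + (b - o)) (2 * (2 + σ) * (a - o)) (2 * (1 + σ) * (b - a))
      (hpt := fun i => ?_) (hA := ?_)
      (f := fun i => if a ≤ x i then 1 else 0)
      (g := fun i => if b ≤ x i then 1 else 0)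
    · have hσo := hmul _ (abs_nonneg (x i - o))
      generalize x i = z at *
      rcases le_or_gt b z with hbz | hbz
      · rw [if_pos hbz, if_pos (hab.trans hbz), abs_of_nonneg, abs_of_nonneg, abs_of_nonneg] <;>
          nlinarith [hmul _ (sub_nonneg.2 hbz)]
      rw [if_neg hbz.not_ge]
      rcases le_or_gt a z with haz | haz
      · rw [if_pos haz, abs_of_nonneg, abs_of_nonpos, abs_of_nonneg] <;>
          nlinarith [hmul _ (sub_nonneg.2 haz)]
      rw [if_neg haz.not_ge, abs_of_neg (sub_neg.2 haz), abs_of_neg (sub_neg.2 hbz)]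
      nlinarith [neg_abs_le (z - o)]
    · have h1 := mul_le_mul_of_nonneg_left har
        (show 0 ≤ 2 * (2 + σ) * (a - o) by nlinarith [hmul _ (sub_nonneg.2 hoa)])
      have h2 := mul_le_mul_of_nonneg_left hbr
        (show 0 ≤ 2 * (1 + σ) * (b - a) by nlinarith [hmul _ (sub_nonneg.2 hab)])
      have e1 : 2 * (2 + σ) * (a - o) * ((2 - σ) / 2) = 2 * (a - o) := by
        linear_combination -(a - o) * hsq
      have e2 : 2 * (1 + σ) * (b - a) * ((σ - 1) / 2) = b - a := by
        linear_combination (b - a) * hsq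
      linarith
  rcases le_total o b with hob | hob
  · refine key (b - a) (2 * (1 + σ) * (o - a)) (2 * (1 + σ) * (b - o))
      (hpt := fun i => ?_) (hA := ?_)
      (f := fun i => if x i ≤ a then 1 else 0)
      (g := fun i => if b ≤ x i then 1 else 0)
    · have hσo := hmul _ (abs_nonneg (x i - o))
      have ho := abs_nonneg (x i - o)
      generalize x i = z at *
      rcases le_or_gt b z with hbz | hbz
      · rw [if_pos hbz]
        rcases le_or_gt z a with haz | haz
        · obtain rfl : a = b := by linarith
          obtain rfl : z = a := by linarith
          obtain rfl : z = o := by linarith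
          simp
        · rw [if_neg haz.not_ge, abs_of_nonneg, abs_of_nonneg, abs_of_nonneg] <;>
            nlinarith [hmul _ (sub_nonneg.2 hbz)]
      rw [if_neg hbz.not_ge]
      rcases le_or_gt z a with haz | haz
      · rw [if_pos haz, abs_of_nonpos, abs_of_nonpos, abs_of_nonpos] <;>
          nlinarith [hmul _ (sub_nonneg.2 haz)]
      rw [if_neg haz.not_ge, abs_of_pos (sub_pos.2 haz), abs_of_neg (sub_neg.2 hbz)]
      nlinarith
    · have h1 := mul_le_mul_of_nonneg_left hal
        (show 0 ≤ 2 * (1 + σ) * (o - a) by nlinarith [hmul _ (sub_nonneg.2 hoa)])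
      have h2 := mul_le_mul_of_nonneg_left hbr
        (show 0 ≤ 2 * (1 + σ) * (b - o) by nlinarith [hmul _ (sub_nonneg.2 hob)])
      have e1 : 2 * (1 + σ) * (o - a) * ((σ - 1) / 2) = o - a := by
        linear_combination (o - a) * hsq
      have e2 : 2 * (1 + σ) * (b - o) * ((σ - 1) / 2) = b - o := by
        linear_combination (b - o) * hsq
      linarith
  · refine key (o - a + (o - b)) (2 * (2 + σ) * (o - b)) (2 * (1 + σ) * (b - a))
      (hpt := fun i => ?_) (hA := ?_)
      (f := fun i => if x i ≤ b then 1 else 0)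
      (g := fun i => if x i ≤ a then 1 else 0)
    · have hσo := hmul _ (abs_nonneg (x i - o))
      generalize x i = z at *
      rcases le_or_gt z a with haz | haz
      · rw [if_pos haz, if_pos (haz.trans hab), abs_of_nonpos, abs_of_nonpos, abs_of_nonpos] <;>
          nlinarith [hmul _ (sub_nonneg.2 haz)]
      rw [if_neg haz.not_ge]
      rcases le_or_gt z b with hbz | hbz
      · rw [if_pos hbz, abs_of_nonneg, abs_of_nonpos, abs_of_nonpos] <;>
          nlinarith [hmul _ (sub_nonneg.2 hbz)]
      rw [if_neg hbz.not_ge, abs_of_pos (sub_pos.2 haz), abs_of_pos (sub_pos.2 hbz)]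
      nlinarith [le_abs_self (z - o)]
    · have h1 := mul_le_mul_of_nonneg_left hbl
        (show 0 ≤ 2 * (2 + σ) * (o - b) by nlinarith [hmul _ (sub_nonneg.2 hob)])
      have h2 := mul_le_mul_of_nonneg_left hal
        (show 0 ≤ 2 * (1 + σ) * (b - a) by nlinarith [hmul _ (sub_nonneg.2 hab)])
      have e1 : 2 * (2 + σ) * (o - b) * ((2 - σ) / 2) = 2 * (o - b) := by
        linear_combination -(o - b) * hsq
      have e2 : 2 * (1 + σ) * (b - a) * ((σ - 1) / 2) = b - a := by
        linear_combination (b - a) * hsq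
      linarith

/-! ### The approximation ratio -/

theorem le_mass_le_kthLeftmost_reps {θ : ℕ → ℝ} {s t : ℕ → ℕ} (hθ0 : ∀ m, 0 < θ m)
    (hθ1 : ∀ m, θ m ≤ 1) {m : ℕ} (S : FLSetting 2 m) (x : Fin S.n → ℝ) {q : ℕ} (hq : 1 ≤ q)
    (hqm : q ≤ m) :
    θ m * q / m ≤ ∑ i, agentWeight S i *
      (if x i ≤ kthLeftmost (repsMS (quantileMech θ s t) S x) q then 1 else 0) := by
  refine le_sum_agentWeight_indicator S x
    (fun j => (quantileMech θ s t).rep m (groupMS S x j)) (· ≤ _) (hθ0 m).le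
    (fun j hj => ?_) (le_countP_le_kthLeftmost hq (by simpa [repsMS] using hqm))
  simp only [quantileMech, card_groupMS] at hj
  refine (Nat.le_ceil _).trans ?_
  exact_mod_cast (kthLeftmost_le_iff (one_le_ceil_mul (hθ0 m) (groupSize_pos S j))
    (by rw [card_groupMS]; exact ceil_mul_le (hθ1 m) _) _).1 hj

theorem le_mass_kthLeftmost_reps_le {θ : ℕ → ℝ} {s t : ℕ → ℕ} (hθ0 : ∀ m, 0 < θ m)
    (hθ1 : ∀ m, θ m ≤ 1) {m : ℕ} (S : FLSetting 2 m) (x : Fin S.n → ℝ) {q : ℕ} (hq : 1 ≤ q)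
    (hqm : q ≤ m) :
    (1 - θ m) * ((m + 1 - q : ℕ) : ℝ) / m ≤ ∑ i, agentWeight S i *
      (if kthLeftmost (repsMS (quantileMech θ s t) S x) q ≤ x i then 1 else 0) := by
  refine le_sum_agentWeight_indicator S x
    (fun j => (quantileMech θ s t).rep m (groupMS S x j)) (_ ≤ ·) (sub_nonneg.2 (hθ1 m))
    (fun j hj => ?_) ?_
  · generalize kthLeftmost (repsMS (quantileMech θ s t) S x) q = z at hj ⊢
    simp only [quantileMech, card_groupMS] at hj
    have hcard := card_lt_countP_kthLeftmost_le_add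
      (one_le_ceil_mul (hθ0 m) (groupSize_pos S j))
      (S := groupMS S x j) (by rw [card_groupMS]; exact ceil_mul_le (hθ1 m) _)
    rw [card_groupMS] at hcard
    have hceil := Nat.ceil_lt_add_one (mul_nonneg (hθ0 m).le (groupSize S j).cast_nonneg)
    have hmono := Multiset.card_le_card (Multiset.monotone_filter_right (groupMS S x j)
      fun c => hj.trans (c := c))
    rw [← Multiset.countP_eq_card_filter, ← Multiset.countP_eq_card_filter] at hmono
    have hcard' : (groupSize S j : ℝ) + 1 ≤ (groupMS S x j).countP (z ≤ ·) +
        ⌈θ m * (groupSize S j : ℝ)⌉₊ := by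
      exact_mod_cast hcard.trans_le (Nat.add_le_add_right hmono _)
    linarith
  · have hcard := card_lt_countP_kthLeftmost_le_add hq
      (S := repsMS (quantileMech θ s t) S x) (by simpa [repsMS] using hqm)
    have hm : Multiset.card (repsMS (quantileMech θ s t) S x) = m := by simp [repsMS]
    rw [hm] at hcard
    change m + 1 - q ≤ (repsMS (quantileMech θ s t) S x).countP _
    omega

theorem quantileMech_ratio {θ : ℕ → ℝ} {s t : ℕ → ℕ} (hθ0 : ∀ m, 0 < θ m)
    (hθ1 : ∀ m, θ m ≤ 1) (hst : ∀ m, 2 ≤ m → 1 ≤ s m ∧ s m < t m ∧ t m ≤ m)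
    (hsl : ∀ m, 2 ≤ m → (√2 - 1) / 2 ≤ θ m * s m / m)
    (hsr : ∀ m, 2 ≤ m → (2 - √2) / 2 ≤ (1 - θ m) * ((m + 1 - s m : ℕ) : ℝ) / m)
    (htl : ∀ m, 2 ≤ m → (2 - √2) / 2 ≤ θ m * t m / m)
    (htr : ∀ m, 2 ≤ m → (√2 - 1) / 2 ≤ (1 - θ m) * ((m + 1 - t m : ℕ) : ℝ) / m)
    (m : ℕ) (S : FLSetting 2 m) (x : Fin S.n → ℝ) (y : Fin 2 → ℝ) :
    SC (sumCost 2) S x (outcome (quantileMech θ s t) S x) ≤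
      (1 + √2) * SC (sumCost 2) S x y := by
  obtain ⟨h1, h2, h3⟩ := hst m S.hmk
  have hs := h2.le.trans h3
  have ht := h1.trans h2.le
  have key := sum_mul_abs_sub_pair_le (x := x) (agentWeight_nonneg S) (sum_agentWeight S)
    (kthLeftmost_mono h1 h2.le
      (by simpa [repsMS] using h3 : t m ≤ Multiset.card (repsMS (quantileMech θ s t) S x)))
    ((hsl m S.hmk).trans (le_mass_le_kthLeftmost_reps hθ0 hθ1 S x h1 hs))
    ((hsr m S.hmk).trans (le_mass_kthLeftmost_reps_le hθ0 hθ1 S x h1 hs))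
    ((htl m S.hmk).trans (le_mass_le_kthLeftmost_reps hθ0 hθ1 S x ht h3))
    ((htr m S.hmk).trans (le_mass_kthLeftmost_reps_le hθ0 hθ1 S x ht h3))
  have hout : SC (sumCost 2) S x (outcome (quantileMech θ s t) S x) =
      ∑ i, agentWeight S i * (|x i - kthLeftmost (repsMS (quantileMech θ s t) S x) (s m)| +
        |x i - kthLeftmost (repsMS (quantileMech θ s t) S x) (t m)|) := SC_sumCost_two ..
  rw [hout, SC_sumCost_two]
  simp only [mul_add (agentWeight S _) |x _ - y 0|, Finset.sum_add_distrib, mul_add (1 + √2)]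
  linarith [key (y 0), key (y 1)]

/-- Suitable ranks and quantiles: the symmetric choice works unless `m = 3` or `m = 5`. -/
theorem exists_quantile_params (m : ℕ) : ∃ (θ : ℝ) (s t : ℕ), 0 < θ ∧ θ ≤ 1 ∧ (2 ≤ m →
    (1 ≤ s ∧ s < t ∧ t ≤ m) ∧ (√2 - 1) / 2 ≤ θ * s / m ∧
    (2 - √2) / 2 ≤ (1 - θ) * ((m + 1 - s : ℕ) : ℝ) / m ∧ (2 - √2) / 2 ≤ θ * t / m ∧
    (√2 - 1) / 2 ≤ (1 - θ) * ((m + 1 - t : ℕ) : ℝ) / m) := by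
  have hlo : (1.414 : ℝ) < √2 := Real.lt_sqrt_of_sq_lt (by norm_num)
  have hhi : √2 < 1.4143 := (Real.sqrt_lt' (by norm_num)).2 (by norm_num)
  by_cases h3 : m = 3
  · subst h3
    refine ⟨5 / 8, 1, 2, by norm_num, by norm_num, fun _ => ⟨by norm_num, ?_, ?_, ?_, ?_⟩⟩ <;>
      norm_num <;> linarith
  by_cases h5 : m = 5
  · subst h5
    refine ⟨5 / 8, 2, 3, by norm_num, by norm_num, fun _ => ⟨by norm_num, ?_, ?_, ?_, ?_⟩⟩ <;>
      norm_num <;> linarith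
  refine ⟨1 / 2, ⌈(√2 - 1) * m⌉₊, m + 1 - ⌈(√2 - 1) * m⌉₊, by norm_num, by norm_num,
    fun hm => ?_⟩
  have hm0 : (0 : ℝ) < m := by positivity
  have hpos : 1 ≤ ⌈(√2 - 1) * (m : ℝ)⌉₊ := one_le_ceil_mul (by linarith) (by omega)
  have hle := Nat.le_ceil ((√2 - 1) * (m : ℝ))
  have hlt := Nat.ceil_lt_add_one (a := (√2 - 1) * (m : ℝ)) (by nlinarith)
  have hhalf : 2 * ⌈(√2 - 1) * (m : ℝ)⌉₊ ≤ m := by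
    have hlt' : (⌈(√2 - 1) * (m : ℝ)⌉₊ : ℝ) < 0.4143 * m + 1 := by nlinarith
    generalize ⌈(√2 - 1) * (m : ℝ)⌉₊ = c at *
    have hnat : 10000 * c < 4143 * m + 10000 := by
      have : (10000 : ℝ) * c < 4143 * m + 10000 := by linarith
      exact_mod_cast this
    omega
  generalize ⌈(√2 - 1) * (m : ℝ)⌉₊ = c at *
  have hc : m + 1 - (m + 1 - c) = c := by omega
  have hcast : ((m + 1 - c : ℕ) : ℝ) = m + 1 - c := by
    rw [Nat.cast_sub (by omega)]
    push_cast
    ring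
  rw [hc, hcast]
  refine ⟨by omega, ?_, ?_, ?_, ?_⟩ <;> rw [le_div_iff₀ hm0] <;> linarith

/-- In the sum-variant with two facilities there is a strategyproof two-phase mechanism
with approximation ratio at most `1 + √2`. -/
theorem stmt3 :
    ∃ M : TwoPhase 2, M.Valid ∧ Strategyproof (sumCost 2) M ∧
      ∀ (m : ℕ) (S : FLSetting 2 m) (x : Fin S.n → ℝ) (y : Fin 2 → ℝ), Feasible S x y →
        SC (sumCost 2) S x (outcome M S x) ≤ (1 + Real.sqrt 2) * SC (sumCost 2) S x y := by
  choose θ s t hθ0 hθ1 h using exists_quantile_params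
  have hst := fun m hm => (h m hm).1
  exact ⟨quantileMech θ s t, quantileMech_valid hθ0 hθ1 hst,
    quantileMech_strategyproof hθ0 hθ1 hst, fun m S x y _ => quantileMech_ratio hθ0 hθ1 hst
      (fun m hm => (h m hm).2.1) (fun m hm => (h m hm).2.2.1) (fun m hm => (h m hm).2.2.2.1)
      (fun m hm => (h m hm).2.2.2.2) m S x y⟩

end
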